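/- The image of the p-mechanical bracket under the Schrödinger representation is a scalar multiple of the operator commutator: let ℏ > 0, let k₁, k₂ be Schwartz functions on ℝ³, let c = k₁*k₂ − k₂*k₁ (Heisenberg-group convolution) and let (Ac)(s, x, y) = ∫_{−∞}^{s} c(t, x, y) dt be its antiderivative in s. Then Ac is integrable on ℝ³ and for every f ∈ L²(ℝ,ℂ): σ_ℏ(Ac)f = −(2iℏ)⁻¹·(σ_ℏ(k₁)(σ_ℏ(k₂)f) − σ_ℏ(k₂)(σ_ℏ(k₁)f)), where σ_ℏ(k)f = ∫_{ℝ³} k(g)·(σ_ℏ(g)f) dg (Bochner integral). -/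

import Mathlib

open MeasureTheory

/-- The multiplication law of the one-dimensional Heisenberg group `H¹ = ℝ³`:
`(s,x,y)·(s',x',y') = (s+s'+(xy'−yx')/2, x+x', y+y')`. -/
noncomputable def heisMul (g g' : ℝ × ℝ × ℝ) : ℝ × ℝ × ℝ :=
  (g.1 + g'.1 + (g.2.1 * g'.2.2 - g.2.2 * g'.2.1) / 2, g.2.1 + g'.2.1, g.2.2 + g'.2.2)

/-- Inversion in the Heisenberg group: `(s,x,y)⁻¹ = (−s,−x,−y)`. -/
def heisInv (h : ℝ × ℝ × ℝ) : ℝ × ℝ × ℝ := (-h.1, -h.2.1, -h.2.2)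

/-- Convolution over the Heisenberg group (with Lebesgue measure on `ℝ³` as
Haar measure): `(k₁*k₂)(g) = ∫_{H¹} k₁(h)·k₂(h⁻¹·g) dh`. -/
noncomputable def heisConv (k₁ k₂ : ℝ × ℝ × ℝ → ℂ) (g : ℝ × ℝ × ℝ) : ℂ :=
  ∫ h : ℝ × ℝ × ℝ, k₁ h * k₂ (heisMul (heisInv h) g)

/-- The convolution commutator `k₁*k₂ − k₂*k₁` on the Heisenberg group. -/
noncomputable def heisComm (k₁ k₂ : ℝ × ℝ × ℝ → ℂ) (g : ℝ × ℝ × ℝ) : ℂ :=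
  heisConv k₁ k₂ g - heisConv k₂ k₁ g

/-- The antiderivative with respect to the central variable `s`:
`(Ac)(s, x, y) = ∫_{−∞}^{s} c(t, x, y) dt`. -/
noncomputable def heisAnti (c : ℝ × ℝ × ℝ → ℂ) (w : ℝ × ℝ × ℝ) : ℂ :=
  ∫ t in Set.Iic w.1, c (t, w.2.1, w.2.2)

/-!
Integration against a representation turns convolution into composition, so `c = k₁*k₂ − k₂*k₁`
acts as the operator commutator. If the centre acts through the character `exp (ω s)`, then
integrating by parts in `s` shows that `Ac` acts as `−ω⁻¹` times `c`, provided that the boundary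
terms vanish, i.e. that `c` has mean zero along almost every coset of the centre. This holds
because integrating over the centre turns Heisenberg convolution into convolution on `ℝ²`, which
is commutative. The integration by parts is carried out as a Fubini argument: for `c` of mean zero,
`∫ t in Iic s, c t` is the integral of `c` against a kernel supported between `0` and `t`, whose
`L¹` norm in `s` is `|t|`; thus a first moment of `c` suffices for `Ac` to be integrable.
-/

section GroupConvolution

variable {G 𝕜 E : Type*} [MeasurableSpace G] [Group G] [RCLike 𝕜] [NormedAddCommGroup E]
  [NormedSpace 𝕜 E] {μ : Measure G}

/-- A multiplicative, uniformly bounded family of operators with `μ`-measurable orbits; this is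
what is needed to integrate it against an integrable function on the group. -/
structure IsBoundedRep (μ : Measure G) (π : G → E →L[𝕜] E) : Prop where
  map_mul_apply : ∀ g h v, π (g * h) v = π g (π h v)
  exists_norm_le : ∃ M, ∀ g, ‖π g‖ ≤ M
  aestronglyMeasurable_apply : ∀ v, AEStronglyMeasurable (fun g => π g v) μ

theorem IsBoundedRep.exists_norm_apply_le {π : G → E →L[𝕜] E} (hπ : IsBoundedRep μ π) (v : E) :
    ∃ M, ∀ g, ‖π g v‖ ≤ M :=
  let ⟨M, hM⟩ := hπ.exists_norm_le
  ⟨M * ‖v‖, fun g => (π g).le_of_opNorm_le (hM g) v⟩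

theorem IsBoundedRep.integrable_smul_apply {π : G → E →L[𝕜] E} (hπ : IsBoundedRep μ π)
    {k : G → 𝕜} (hk : Integrable k μ) (v : E) : Integrable (fun g => k g • π g v) μ :=
  let ⟨M, hM⟩ := hπ.exists_norm_apply_le v
  hk.smul_bdd M (hπ.aestronglyMeasurable_apply v) (ae_of_all _ hM)

variable [MeasurableMul₂ G] [MeasurableInv G] [SFinite μ] [μ.IsMulLeftInvariant]

theorem integrable_mul_inv_mul {k₁ k₂ : G → 𝕜} (h₁ : Integrable k₁ μ) (h₂ : Integrable k₂ μ) :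
    Integrable (fun z : G × G => k₁ z.1 * k₂ (z.1⁻¹ * z.2)) (μ.prod μ) :=
  (measurePreserving_prod_inv_mul μ μ).integrable_comp_of_integrable (h₁.mul_prod h₂)

theorem IsBoundedRep.integral_smul_integral [NormedSpace ℝ E] [CompleteSpace E]
    {π : G → E →L[𝕜] E} (hπ : IsBoundedRep μ π) {k₁ k₂ : G → 𝕜} (h₁ : Integrable k₁ μ)
    (h₂ : Integrable k₂ μ) (v : E) :
    ∫ g, k₁ g • π g (∫ h, k₂ h • π h v ∂μ) ∂μ =
      ∫ g, (∫ h, k₁ h * k₂ (h⁻¹ * g) ∂μ) • π g v ∂μ := by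
  obtain ⟨M, hM⟩ := hπ.exists_norm_apply_le v
  have hint : Integrable (fun z : G × G => (k₁ z.1 * k₂ (z.1⁻¹ * z.2)) • π z.2 v) (μ.prod μ) :=
    (integrable_mul_inv_mul h₁ h₂).smul_bdd M (hπ.aestronglyMeasurable_apply v).comp_snd
      (ae_of_all _ fun z => hM z.2)
  calc ∫ g, k₁ g • π g (∫ h, k₂ h • π h v ∂μ) ∂μ
      = ∫ g, ∫ h, (k₁ g * k₂ h) • π (g * h) v ∂μ ∂μ := by
        refine integral_congr_ae (ae_of_all _ fun g => ?_)
        simp only [← (π g).integral_comp_comm (hπ.integrable_smul_apply h₂ v), map_smul,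
          ← integral_smul, hπ.map_mul_apply, mul_smul]
    _ = ∫ g, ∫ h, (k₁ g * k₂ (g⁻¹ * h)) • π h v ∂μ ∂μ := by
        refine integral_congr_ae (ae_of_all _ fun g => ?_)
        simpa only [mul_inv_cancel_left] using
          (integral_mul_left_eq_self (fun h => (k₁ g * k₂ h) • π (g * h) v) g⁻¹).symm
    _ = ∫ g, (∫ h, k₁ h * k₂ (h⁻¹ * g) ∂μ) • π g v ∂μ := by
        rw [integral_integral_swap hint]
        simp only [integral_smul_const]

end GroupConvolution

section MeanZeroPrimitive

open Set

/-- The signed indicator of the oriented interval from `t` to `0`, evaluated at `s`. As a kernel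
in `(s, t)` it represents the primitive `s ↦ ∫ t in Iic s, c t` of any `c` of mean zero. -/
noncomputable def orientedIndicator (t s : ℝ) : ℝ :=
  (Ioc t 0).indicator 1 s - (Ioc 0 t).indicator 1 s

theorem orientedIndicator_eq (t s : ℝ) :
    orientedIndicator t s = (Iio s).indicator 1 t - (Ioi 0).indicator 1 s := by
  simp only [orientedIndicator, indicator_apply, mem_Ioc, mem_Iio, mem_Ioi, Pi.one_apply]
  split_ifs <;> grind

theorem measurable_orientedIndicator : Measurable fun z : ℝ × ℝ => orientedIndicator z.1 z.2 := by
  simp_rw [orientedIndicator_eq]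
  refine Measurable.sub ?_ ((measurable_one.indicator measurableSet_Ioi).comp measurable_snd)
  exact (measurable_one (α := ℝ)).indicator (measurableSet_lt measurable_fst measurable_snd)

theorem abs_orientedIndicator (t s : ℝ) :
    |orientedIndicator t s| = (uIoc 0 t).indicator 1 s := by
  rcases le_total 0 t with ht | ht <;>
    simp [orientedIndicator, ht, abs_of_nonneg, indicator_nonneg]

theorem integral_abs_orientedIndicator (t : ℝ) : ∫ s, |orientedIndicator t s| = |t| := by
  simp only [abs_orientedIndicator]
  rw [integral_indicator_one measurableSet_uIoc]
  simp [Measure.real]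

theorem integrable_orientedIndicator (t : ℝ) : Integrable (orientedIndicator t) := by
  have hone (a b : ℝ) : Integrable ((Ioc a b).indicator (1 : ℝ → ℝ)) :=
    (integrable_indicator_iff measurableSet_Ioc).2 (integrableOn_const (by simp))
  exact (hone t 0).sub (hone 0 t)

variable {E : Type*} [NormedAddCommGroup E]

theorem integral_orientedIndicator_smul [NormedSpace ℝ E] {ψ : ℝ → E} (hψ : Continuous ψ) (t : ℝ) :
    ∫ s, orientedIndicator t s • ψ s = ∫ s in t..0, ψ s := by
  have hint (a b : ℝ) : Integrable ((Ioc a b).indicator ψ) :=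
    hψ.integrableOn_Ioc.integrable_indicator measurableSet_Ioc
  rw [intervalIntegral, ← integral_indicator measurableSet_Ioc,
    ← integral_indicator measurableSet_Ioc, ← integral_sub (hint _ _) (hint _ _)]
  refine integral_congr_ae (ae_of_all _ fun s => ?_)
  simp only [orientedIndicator, indicator_apply, Pi.one_apply, sub_smul, ite_smul, one_smul,
    zero_smul]

theorem integrable_orientedIndicator_smul [NormedSpace ℝ E] {c : ℝ → E} (hc : Integrable c)
    (htc : Integrable fun t => t • c t) :
    Integrable (fun z : ℝ × ℝ => orientedIndicator z.2 z.1 • c z.2) (volume.prod volume) := by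
  have hmeas : AEStronglyMeasurable (fun z : ℝ × ℝ => orientedIndicator z.2 z.1 • c z.2)
      (volume.prod volume) :=
    (measurable_orientedIndicator.comp measurable_swap).aestronglyMeasurable.smul
      hc.aestronglyMeasurable.comp_snd
  refine (integrable_prod_iff' hmeas).2
    ⟨ae_of_all _ fun t => (integrable_orientedIndicator t).smul_const (c t), ?_⟩
  simpa only [norm_smul, Real.norm_eq_abs, integral_mul_const, integral_abs_orientedIndicator]
    using htc.norm

theorem setIntegral_Iic_eq_integral_orientedIndicator [NormedSpace ℝ E] {c : ℝ → E}
    (hc : Integrable c) (h0 : ∫ t, c t = 0) (s : ℝ) :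
    ∫ t in Iic s, c t = ∫ t, orientedIndicator t s • c t := by
  have hsplit (t : ℝ) : orientedIndicator t s • c t =
      (Iio s).indicator c t - (Ioi (0 : ℝ)).indicator (1 : ℝ → ℝ) s • c t := by
    by_cases ht : t ∈ Iio s <;> simp [orientedIndicator_eq, sub_smul, ht]
  simp only [hsplit]
  rw [integral_sub (hc.indicator measurableSet_Iio) (hc.fun_smul _), integral_smul, h0, smul_zero,
    sub_zero, integral_indicator measurableSet_Iio, integral_Iic_eq_integral_Iio]

theorem integrable_setIntegral_Iic [NormedSpace ℝ E] {c : ℝ → E} (hc : Integrable c)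
    (htc : Integrable fun t => t • c t) (h0 : ∫ t, c t = 0) :
    Integrable fun s => ∫ t in Iic s, c t := by
  simpa only [setIntegral_Iic_eq_integral_orientedIndicator hc h0] using
    (integrable_orientedIndicator_smul hc htc).integral_prod_left

theorem integral_norm_setIntegral_Iic_le [NormedSpace ℝ E] {c : ℝ → E} (hc : Integrable c)
    (htc : Integrable fun t => t • c t) (h0 : ∫ t, c t = 0) :
    ∫ s, ‖∫ t in Iic s, c t‖ ≤ ∫ t, ‖t • c t‖ := by
  have hK := integrable_orientedIndicator_smul hc htc
  calc ∫ s, ‖∫ t in Iic s, c t‖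
      ≤ ∫ s, ∫ t, ‖orientedIndicator t s • c t‖ := by
        refine integral_mono (integrable_setIntegral_Iic hc htc h0).norm
          hK.integral_norm_prod_left fun s => ?_
        simpa only [setIntegral_Iic_eq_integral_orientedIndicator hc h0] using
          norm_integral_le_integral_norm _
    _ = ∫ t, ∫ s, ‖orientedIndicator t s • c t‖ := integral_integral_swap hK.norm
    _ = ∫ t, ‖t • c t‖ := by
        simp only [norm_smul, Real.norm_eq_abs, integral_mul_const,
          integral_abs_orientedIndicator]

theorem integral_setIntegral_Iic_smul [NormedSpace ℂ E] [CompleteSpace E] {c : ℝ → ℂ}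
    (hc : Integrable c) (htc : Integrable fun t => t • c t) (h0 : ∫ t, c t = 0) {ψ : ℝ → E}
    (hψ : Continuous ψ) {M : ℝ} (hM : ∀ s, ‖ψ s‖ ≤ M) :
    ∫ s, (∫ t in Iic s, c t) • ψ s = ∫ t, c t • ∫ s in t..0, ψ s := by
  have hK : Integrable (fun z : ℝ × ℝ => (orientedIndicator z.2 z.1 • c z.2) • ψ z.1)
      (volume.prod volume) :=
    (integrable_orientedIndicator_smul hc htc).smul_bdd M
      (hψ.comp continuous_fst).aestronglyMeasurable (ae_of_all _ fun z => hM z.1)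
  calc ∫ s, (∫ t in Iic s, c t) • ψ s
      = ∫ s, ∫ t, (orientedIndicator t s • c t) • ψ s := by
        simp only [setIntegral_Iic_eq_integral_orientedIndicator hc h0, integral_smul_const]
    _ = ∫ t, ∫ s, (orientedIndicator t s • c t) • ψ s := integral_integral_swap hK
    _ = ∫ t, c t • ∫ s in t..0, ψ s := by
        simp only [← integral_orientedIndicator_smul hψ, ← integral_smul, smul_assoc,
          smul_comm (c _)]

end MeanZeroPrimitive

section FibrewisePrimitive

variable {P E : Type*} [MeasurableSpace P] {ν : Measure P} [SFinite ν] [NormedAddCommGroup E]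

theorem aestronglyMeasurable_setIntegral_Iic_fst [NormedSpace ℝ E] {C : ℝ × P → E}
    (hC : AEStronglyMeasurable C (volume.prod ν)) :
    AEStronglyMeasurable (fun z : ℝ × P => ∫ t in Set.Iic z.1, C (t, z.2))
      (volume.prod ν) := by
  have hfibre : Measure.QuasiMeasurePreserving (fun w : (ℝ × P) × ℝ => (w.2, w.1.2))
      ((volume.prod ν).prod volume) (volume.prod ν) :=
    Measure.measurePreserving_swap.quasiMeasurePreserving.comp
      (Measure.quasiMeasurePreserving_snd.comp
        (measurePreserving_prodAssoc volume ν volume).quasiMeasurePreserving)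
  have hle : MeasurableSet {w : (ℝ × P) × ℝ | w.2 ≤ w.1.1} :=
    measurableSet_le measurable_snd (measurable_fst.comp measurable_fst)
  refine ((hC.comp_quasiMeasurePreserving hfibre).indicator hle).integral_prod_right'.congr
    (ae_of_all _ fun z => ?_)
  exact integral_indicator (f := fun t => C (t, z.2)) (s := Set.Iic z.1) measurableSet_Iic

theorem integrable_setIntegral_Iic_fst [NormedSpace ℝ E] {C : ℝ × P → E}
    (hC : Integrable C (volume.prod ν)) (hsC : Integrable (fun z => z.1 • C z) (volume.prod ν))
    (h0 : ∀ᵐ p ∂ν, ∫ t, C (t, p) = 0) :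
    Integrable (fun z : ℝ × P => ∫ t in Set.Iic z.1, C (t, z.2)) (volume.prod ν) := by
  have hmeas := aestronglyMeasurable_setIntegral_Iic_fst hC.aestronglyMeasurable
  refine (integrable_prod_iff' hmeas).2 ⟨?_, ?_⟩
  · filter_upwards [hC.prod_left_ae, hsC.prod_left_ae, h0] with p hc htc h
    exact integrable_setIntegral_Iic hc htc h
  · refine hsC.integral_norm_prod_right.mono' hmeas.norm.prod_swap.integral_prod_right' ?_
    filter_upwards [hC.prod_left_ae, hsC.prod_left_ae, h0] with p hc htc h
    rw [Real.norm_of_nonneg (integral_nonneg fun _ => norm_nonneg _)]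
    exact integral_norm_setIntegral_Iic_le hc htc h

theorem intervalIntegral_exp_smul [NormedSpace ℂ E] [CompleteSpace E] {ω : ℂ} (hω : ω ≠ 0)
    (t : ℝ) (v : E) :
    ∫ s in t..0, Complex.exp (ω * s) • v = ω⁻¹ • v - ω⁻¹ • Complex.exp (ω * t) • v := by
  rw [intervalIntegral.integral_smul_const, integral_exp_mul_complex hω, Complex.ofReal_zero,
    mul_zero, Complex.exp_zero, div_eq_inv_mul]
  module

theorem integral_setIntegral_Iic_fst_smul [NormedSpace ℂ E] [CompleteSpace E] {C : ℝ × P → ℂ}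
    (hC : Integrable C (volume.prod ν)) (hsC : Integrable (fun z => z.1 • C z) (volume.prod ν))
    (h0 : ∀ᵐ p ∂ν, ∫ t, C (t, p) = 0) {V : ℝ × P → E}
    (hV : AEStronglyMeasurable V (volume.prod ν)) {M : ℝ} (hM : ∀ z, ‖V z‖ ≤ M) {ω : ℂ}
    (hω : ω ≠ 0) (hVω : ∀ s p, V (s, p) = Complex.exp (ω * s) • V (0, p)) :
    ∫ z, (∫ t in Set.Iic z.1, C (t, z.2)) • V z ∂(volume.prod ν) =
      -ω⁻¹ • ∫ z, C z • V z ∂(volume.prod ν) := by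
  have hCV : Integrable (fun z => C z • V z) (volume.prod ν) :=
    hC.smul_bdd M hV (ae_of_all _ hM)
  have hAV : Integrable (fun z => (∫ t in Set.Iic z.1, C (t, z.2)) • V z) (volume.prod ν) :=
    (integrable_setIntegral_Iic_fst hC hsC h0).smul_bdd M hV (ae_of_all _ hM)
  rw [integral_prod_symm _ hCV, integral_prod_symm _ hAV, ← integral_smul]
  refine integral_congr_ae ?_
  filter_upwards [hC.prod_left_ae, hsC.prod_left_ae, hCV.prod_left_ae, h0] with p hc htc hcV h
  have hVp : (fun s => V (s, p)) = fun s : ℝ => Complex.exp (ω * s) • V (0, p) :=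
    funext fun s => hVω s p
  have hcont : Continuous fun s => V (s, p) := by rw [hVp]; fun_prop
  calc ∫ s, (∫ t in Set.Iic s, C (t, p)) • V (s, p)
      = ∫ t, C (t, p) • ∫ s in t..0, V (s, p) :=
        integral_setIntegral_Iic_smul hc htc h hcont fun s => hM (s, p)
    _ = ∫ t, (C (t, p) • ω⁻¹ • V (0, p) - ω⁻¹ • C (t, p) • V (t, p)) := by
        refine integral_congr_ae (ae_of_all _ fun t => ?_)
        simp only [hVp, intervalIntegral_exp_smul hω, ← hVω t p, smul_sub, smul_comm (C _) ω⁻¹]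
    _ = -ω⁻¹ • ∫ t, C (t, p) • V (t, p) := by
        rw [integral_sub (hc.smul_const _) (hcV.fun_smul _), integral_smul_const, h, zero_smul,
          zero_sub, integral_smul, neg_smul]

end FibrewisePrimitive

/-- The type `ℝ³` carrying the Heisenberg group law `heisMul` and Lebesgue measure; a synonym,
so that the group law does not clash with coordinatewise multiplication. -/
def HeisenbergGroup : Type := ℝ × ℝ × ℝ

namespace HeisenbergGroup

noncomputable instance : Mul HeisenbergGroup := ⟨heisMul⟩
instance : Inv HeisenbergGroup := ⟨heisInv⟩
instance : One HeisenbergGroup := ⟨((0, 0, 0) : ℝ × ℝ × ℝ)⟩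

noncomputable instance : Group HeisenbergGroup :=
  Group.ofLeftAxioms
    (fun a b c => by
      change heisMul (heisMul a b) c = heisMul a (heisMul b c)
      ext <;> simp only [heisMul] <;> ring)
    (fun a => by
      change heisMul (0, 0, 0) a = a
      ext <;> simp [heisMul])
    (fun a => by
      change heisMul (heisInv a) a = (0, 0, 0)
      ext <;> simp only [heisMul, heisInv] <;> ring)

noncomputable instance : MeasureSpace HeisenbergGroup :=
  inferInstanceAs (MeasureSpace (ℝ × ℝ × ℝ))

instance : SFinite (volume : Measure HeisenbergGroup) :=
  inferInstanceAs (SFinite (volume : Measure (ℝ × ℝ × ℝ)))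

instance : MeasurableMul₂ HeisenbergGroup where
  measurable_mul := by
    change Measurable fun z : (ℝ × ℝ × ℝ) × (ℝ × ℝ × ℝ) => heisMul z.1 z.2
    unfold heisMul
    fun_prop

instance : MeasurableInv HeisenbergGroup where
  measurable_inv := by
    change Measurable fun h : ℝ × ℝ × ℝ => heisInv h
    unfold heisInv
    fun_prop

end HeisenbergGroup

instance isAddHaarMeasure_volume_prod {α β : Type*} [AddGroup α] [TopologicalSpace α]
    [MeasureSpace α] [AddGroup β] [TopologicalSpace β] [MeasureSpace β]
    [(volume : Measure α).IsAddHaarMeasure] [(volume : Measure β).IsAddHaarMeasure]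
    [SFinite (volume : Measure α)] [SFinite (volume : Measure β)] [MeasurableAdd α]
    [MeasurableAdd β] : (volume : Measure (α × β)).IsAddHaarMeasure :=
  Measure.prod.instIsAddHaarMeasure _ _

theorem measurePreserving_heisMul_left (h : ℝ × ℝ × ℝ) : MeasurePreserving (heisMul h) := by
  have hshear : MeasurePreserving
      (fun z : (ℝ × ℝ) × ℝ => (h.2 + z.1, z.2 + (h.1 + (h.2.1 * z.1.2 - h.2.2 * z.1.1) / 2)))
      (volume.prod volume) (volume.prod volume) :=
    (measurePreserving_add_left volume h.2).skew_product
      (g := fun p t => t + (h.1 + (h.2.1 * p.2 - h.2.2 * p.1) / 2)) (by fun_prop)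
      (ae_of_all _ fun p => (measurePreserving_add_right volume _).map_eq)
  convert! (Measure.measurePreserving_swap.comp hshear).comp Measure.measurePreserving_swap
    using 1
  ext g <;> simp only [heisMul, Function.comp_apply, Prod.fst_swap, Prod.snd_swap,
    Prod.swap_prod_mk, Prod.fst_add, Prod.snd_add]
  ring

instance : (volume : Measure HeisenbergGroup).IsMulLeftInvariant :=
  ⟨fun h => (measurePreserving_heisMul_left h).map_eq⟩

section HeisenbergConvolution

variable {k₁ k₂ : ℝ × ℝ × ℝ → ℂ}

theorem integrable_heisConv_integrand (h₁ : Integrable k₁) (h₂ : Integrable k₂) :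
    Integrable fun z : (ℝ × ℝ × ℝ) × (ℝ × ℝ × ℝ) => k₁ z.1 * k₂ (heisMul (heisInv z.1) z.2) :=
  integrable_mul_inv_mul (G := HeisenbergGroup) (μ := volume) h₁ h₂

theorem integrable_heisConv (h₁ : Integrable k₁) (h₂ : Integrable k₂) :
    Integrable (heisConv k₁ k₂) :=
  (integrable_heisConv_integrand h₁ h₂).integral_prod_right

theorem abs_fst_heisMul_le (g h : ℝ × ℝ × ℝ) : |(heisMul g h).1| ≤ (1 + ‖g‖) * (1 + ‖h‖) := by
  have hcoord (k : ℝ × ℝ × ℝ) : |k.1| ≤ ‖k‖ ∧ |k.2.1| ≤ ‖k‖ ∧ |k.2.2| ≤ ‖k‖ :=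
    ⟨norm_fst_le k, (norm_fst_le _).trans (norm_snd_le k), (norm_snd_le _).trans (norm_snd_le k)⟩
  obtain ⟨gs, gx, gy⟩ := hcoord g
  obtain ⟨hs, hx, hy⟩ := hcoord h
  have hxy : |g.2.1 * h.2.2| ≤ ‖g‖ * ‖h‖ := by rw [abs_mul]; gcongr
  have hyx : |g.2.2 * h.2.1| ≤ ‖g‖ * ‖h‖ := by rw [abs_mul]; gcongr
  rw [abs_le] at gs hs hxy hyx ⊢
  constructor <;> simp only [heisMul] <;> linarith

theorem integrable_fst_smul_heisConv (h₁ : Integrable k₁) (h₂ : Integrable k₂)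
    (m₁ : Integrable fun g => ‖g‖ * ‖k₁ g‖) (m₂ : Integrable fun g => ‖g‖ * ‖k₂ g‖) :
    Integrable fun g => g.1 • heisConv k₁ k₂ g := by
  have hdom : Integrable (fun z : (ℝ × ℝ × ℝ) × (ℝ × ℝ × ℝ) =>
      (heisMul z.1 z.2).1 • (k₁ z.1 * k₂ z.2)) (volume.prod volume) := by
    refine ((h₁.norm.add m₁).mul_prod (h₂.norm.add m₂)).mono' ?_ (ae_of_all _ fun z => ?_)
    · have hfst : Measurable fun z : (ℝ × ℝ × ℝ) × (ℝ × ℝ × ℝ) => (heisMul z.1 z.2).1 := by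
        unfold heisMul
        fun_prop
      exact hfst.aestronglyMeasurable.smul (h₁.mul_prod h₂).aestronglyMeasurable
    · simp only [Pi.add_apply, norm_smul, norm_mul, Real.norm_eq_abs]
      calc |(heisMul z.1 z.2).1| * (‖k₁ z.1‖ * ‖k₂ z.2‖)
          ≤ (1 + ‖z.1‖) * (1 + ‖z.2‖) * (‖k₁ z.1‖ * ‖k₂ z.2‖) := by
            gcongr
            exact abs_fst_heisMul_le _ _
        _ = (‖k₁ z.1‖ + ‖z.1‖ * ‖k₁ z.1‖) * (‖k₂ z.2‖ + ‖z.2‖ * ‖k₂ z.2‖) := by ring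
  have hshear : Integrable (fun z : (ℝ × ℝ × ℝ) × (ℝ × ℝ × ℝ) =>
      z.2.1 • (k₁ z.1 * k₂ (heisMul (heisInv z.1) z.2))) (volume.prod volume) := by
    refine ((measurePreserving_prod_inv_mul (G := HeisenbergGroup) volume volume)
      |>.integrable_comp_of_integrable hdom).congr (ae_of_all _ fun z => ?_)
    exact congrArg (fun g : ℝ × ℝ × ℝ => g.1 • (k₁ z.1 * k₂ (heisMul (heisInv z.1) z.2)))
      (mul_inv_cancel_left (G := HeisenbergGroup) z.1 z.2)
  exact hshear.integral_prod_right.congr (ae_of_all _ fun g => integral_smul g.1 _)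

/-- The integral of `k` over the cosets of the centre `{(t, 0, 0)}`: the pushforward of `k` to the
abelian quotient `ℝ²`. -/
noncomputable def centralIntegral (k : ℝ × ℝ × ℝ → ℂ) (p : ℝ × ℝ) : ℂ := ∫ t, k (t, p)

theorem centralIntegral_comp_heisMul (k : ℝ × ℝ × ℝ → ℂ) (g : ℝ × ℝ × ℝ) (p : ℝ × ℝ) :
    centralIntegral (k ∘ heisMul g) p = centralIntegral k (g.2 + p) := by
  have htranslate (t : ℝ) : heisMul g (t, p) =
      (t + (g.1 + (g.2.1 * p.2 - g.2.2 * p.1) / 2), g.2 + p) := by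
    ext <;> simp only [heisMul, Prod.fst_add, Prod.snd_add]; ring
  simp only [centralIntegral, Function.comp_apply, htranslate]
  exact integral_add_right_eq_self (fun t => k (t, g.2 + p)) _

open scoped Convolution in
theorem centralIntegral_heisConv_ae_eq (h₁ : Integrable k₁) (h₂ : Integrable k₂) :
    centralIntegral (heisConv k₁ k₂) =ᵐ[volume]
      (centralIntegral k₁ ⋆[ContinuousLinearMap.mul ℝ ℂ] centralIntegral k₂) := by
  have hfibre : Integrable (fun w : ((ℝ × ℝ × ℝ) × ℝ) × (ℝ × ℝ) =>
      k₁ w.1.1 * k₂ (heisMul (heisInv w.1.1) (w.1.2, w.2)))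
      ((volume.prod volume).prod volume) :=
    (measurePreserving_prodAssoc volume volume volume).integrable_comp_of_integrable
      (integrable_heisConv_integrand h₁ h₂)
  filter_upwards [hfibre.prod_left_ae] with p hp
  have hinner (h : ℝ × ℝ × ℝ) : ∫ t, k₁ h * k₂ (heisMul (heisInv h) (t, p)) =
      k₁ h * centralIntegral k₂ (p - h.2) := by
    rw [integral_const_mul, sub_eq_neg_add]
    exact congrArg (k₁ h * ·) (centralIntegral_comp_heisMul k₂ (heisInv h) p)
  have hint : Integrable fun h : ℝ × ℝ × ℝ => k₁ h * centralIntegral k₂ (p - h.2) := by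
    simpa only [hinner] using hp.integral_prod_left
  calc centralIntegral (heisConv k₁ k₂) p
      = ∫ h : ℝ × ℝ × ℝ, ∫ t, k₁ h * k₂ (heisMul (heisInv h) (t, p)) :=
        (integral_integral_swap hp).symm
    _ = ∫ h : ℝ × ℝ × ℝ, k₁ h * centralIntegral k₂ (p - h.2) := by simp only [hinner]
    _ = ∫ q, centralIntegral k₁ q * centralIntegral k₂ (p - q) := by
        refine (integral_prod_symm _ hint).trans ?_
        simp only [integral_mul_const, centralIntegral]
    _ = (centralIntegral k₁ ⋆[ContinuousLinearMap.mul ℝ ℂ] centralIntegral k₂) p := rfl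

theorem integrable_heisComm (h₁ : Integrable k₁) (h₂ : Integrable k₂) :
    Integrable (heisComm k₁ k₂) :=
  (integrable_heisConv h₁ h₂).sub (integrable_heisConv h₂ h₁)

theorem integrable_fst_smul_heisComm (h₁ : Integrable k₁) (h₂ : Integrable k₂)
    (m₁ : Integrable fun g => ‖g‖ * ‖k₁ g‖) (m₂ : Integrable fun g => ‖g‖ * ‖k₂ g‖) :
    Integrable fun g => g.1 • heisComm k₁ k₂ g := by
  simp only [heisComm, smul_sub]
  exact (integrable_fst_smul_heisConv h₁ h₂ m₁ m₂).sub (integrable_fst_smul_heisConv h₂ h₁ m₂ m₁)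

open scoped Convolution in
theorem centralIntegral_heisComm_ae_eq_zero (h₁ : Integrable k₁) (h₂ : Integrable k₂) :
    centralIntegral (heisComm k₁ k₂) =ᵐ[volume] 0 := by
  have hcomm : centralIntegral k₂ ⋆[ContinuousLinearMap.mul ℝ ℂ] centralIntegral k₁ =
      centralIntegral k₁ ⋆[ContinuousLinearMap.mul ℝ ℂ] centralIntegral k₂ := by
    rw [← convolution_flip, ContinuousLinearMap.flip_mul]
  filter_upwards [centralIntegral_heisConv_ae_eq h₁ h₂, centralIntegral_heisConv_ae_eq h₂ h₁,
    (integrable_heisConv h₁ h₂).prod_left_ae, (integrable_heisConv h₂ h₁).prod_left_ae]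
    with p e₁₂ e₂₁ i₁₂ i₂₁
  calc centralIntegral (heisComm k₁ k₂) p
      = centralIntegral (heisConv k₁ k₂) p - centralIntegral (heisConv k₂ k₁) p :=
        integral_sub i₁₂ i₂₁
    _ = 0 := by rw [e₁₂, e₂₁, hcomm, sub_self]

end HeisenbergConvolution

section LpMeasurability

theorem measurable_of_measurable_edist {X Y : Type*} [MeasurableSpace X] [PseudoEMetricSpace Y]
    [SecondCountableTopology Y] [MeasurableSpace Y] [BorelSpace Y] {F : X → Y}
    (hF : ∀ y, Measurable fun x => edist (F x) y) : Measurable F := by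
  refine measurable_of_isOpen fun U hU => ?_
  choose! r hr hrU using fun y (hy : y ∈ U) => EMetric.isOpen_iff.1 hU y hy
  obtain ⟨T, -, hT, hTeq⟩ := TopologicalSpace.isOpen_biUnion_countable U
    (fun y => Metric.eball y (r y)) fun _ _ => Metric.isOpen_eball
  have hU' : U = ⋃ y ∈ T, Metric.eball y (r y) := by
    rw [hTeq]
    exact Set.Subset.antisymm
      (fun y hy => Set.mem_biUnion hy (Metric.mem_eball_self (hr y hy))) (Set.iUnion₂_subset hrU)
  rw [hU', Set.preimage_iUnion₂]
  exact .biUnion hT fun y _ => measurableSet_lt (hF y) measurable_const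

theorem stronglyMeasurable_of_forall_Lp_ae_eq {X α E : Type*} [MeasurableSpace X]
    [MeasurableSpace α] {μ : Measure α} [SFinite μ] [IsSeparable μ] [NormedAddCommGroup E]
    [SecondCountableTopology E] [MeasurableSpace E] [BorelSpace E] {p : ENNReal}
    [Fact (1 ≤ p)] [Fact (p ≠ ⊤)] {V : X → Lp E p μ} {u : X × α → E} (hu : Measurable u)
    (hVu : ∀ x, V x =ᵐ[μ] fun a => u (x, a)) : StronglyMeasurable V := by
  have hp0 : p ≠ 0 := (zero_lt_one.trans_le Fact.out).ne'
  borelize ↥(Lp E p μ)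
  refine (measurable_of_measurable_edist fun v => ?_).stronglyMeasurable
  have hedist (x : X) : edist (V x) v =
      (∫⁻ a, ‖u (x, a) - v a‖ₑ ^ p.toReal ∂μ) ^ (1 / p.toReal) := by
    rw [Lp.edist_def, eLpNorm_congr_ae ((hVu x).sub (ae_eq_refl _)),
      eLpNorm_eq_lintegral_rpow_enorm_toReal hp0 Fact.out]
    simp only [Pi.sub_apply]
  simp only [hedist]
  refine Measurable.pow_const (Measurable.lintegral_prod_right'
    (f := fun z : X × α => ‖u z - v z.2‖ₑ ^ p.toReal) ?_) _
  exact (hu.sub ((Lp.stronglyMeasurable v).measurable.comp measurable_snd)).enorm.pow_const _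

end LpMeasurability

/-- `σ` is the Schrödinger representation with parameter `ℏ`. Since an element of `L²` is only
defined almost everywhere, its defining formula is required for almost every `t`. -/
def IsSchrodinger (ℏ : ℝ)
    (σ : ℝ × ℝ × ℝ → (Lp ℂ 2 (volume : Measure ℝ) ≃ₗᵢ[ℂ] Lp ℂ 2 (volume : Measure ℝ))) : Prop :=
  ∀ (s x y : ℝ) (f : Lp ℂ 2 (volume : Measure ℝ)),
    (σ (s, x, y) f : ℝ → ℂ) =ᵐ[volume] fun t : ℝ =>
      Complex.exp (Complex.I *
          ((2 * s * ℏ - Real.sqrt (2 * ℏ) * y * t + ℏ * x * y : ℝ) : ℂ)) *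
        (f : ℝ → ℂ) (t - Real.sqrt (2 * ℏ) * x)

namespace IsSchrodinger

variable {ℏ : ℝ}
  {σ : ℝ × ℝ × ℝ → (Lp ℂ 2 (volume : Measure ℝ) ≃ₗᵢ[ℂ] Lp ℂ 2 (volume : Measure ℝ))}

theorem stronglyMeasurable_apply (hσ : IsSchrodinger ℏ σ) (f : Lp ℂ 2 (volume : Measure ℝ)) :
    StronglyMeasurable fun g => σ g f := by
  have hf : Measurable f := (Lp.stronglyMeasurable f).measurable
  have : Fact ((2 : ENNReal) ≠ ⊤) := ⟨ENNReal.ofNat_ne_top⟩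
  refine stronglyMeasurable_of_forall_Lp_ae_eq (u := fun z : (ℝ × ℝ × ℝ) × ℝ =>
    Complex.exp (Complex.I * ((2 * z.1.1 * ℏ - Real.sqrt (2 * ℏ) * z.1.2.2 * z.2 +
      ℏ * z.1.2.1 * z.1.2.2 : ℝ) : ℂ)) * f (z.2 - Real.sqrt (2 * ℏ) * z.1.2.1))
    ?_ fun g => hσ g.1 g.2.1 g.2.2 f
  exact Measurable.mul (by fun_prop) (hf.comp (by fun_prop))

theorem apply_center (hσ : IsSchrodinger ℏ σ) (s : ℝ) (f : Lp ℂ 2 (volume : Measure ℝ)) :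
    σ (s, 0, 0) f = Complex.exp (2 * Complex.I * ℏ * s) • f := by
  refine Lp.ext ?_
  filter_upwards [hσ s 0 0 f, Lp.coeFn_smul (Complex.exp (2 * Complex.I * ℏ * s)) f] with t hσt hft
  rw [hσt, hft, Pi.smul_apply, smul_eq_mul, mul_zero, sub_zero]
  congr 2
  push_cast
  ring

theorem apply_heisMul (hσ : IsSchrodinger ℏ σ) (hℏ : 0 ≤ ℏ) (g h : ℝ × ℝ × ℝ)
    (f : Lp ℂ 2 (volume : Measure ℝ)) : σ (heisMul g h) f = σ g (σ h f) := by
  obtain ⟨s, x, y⟩ := g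
  obtain ⟨s', x', y'⟩ := h
  have hshift := (measurePreserving_sub_right volume
    (Real.sqrt (2 * ℏ) * x)).quasiMeasurePreserving.ae (hσ s' x' y' f)
  have hsq : (Real.sqrt (2 * ℏ) : ℂ) * Real.sqrt (2 * ℏ) = 2 * ℏ := by
    rw [← Complex.ofReal_mul, Real.mul_self_sqrt (by positivity), Complex.ofReal_mul,
      Complex.ofReal_ofNat]
  refine Lp.ext ?_
  filter_upwards [hσ _ _ _ f, hσ s x y (σ (s', x', y') f), hshift] with t hmul hg hh
  refine hmul.trans (Eq.trans ?_ hg.symm)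
  rw [hh, ← mul_assoc, ← Complex.exp_add]
  congr 2
  · push_cast
    linear_combination -(Complex.I * (y' * x : ℂ) * hsq)
  · ring

theorem isBoundedRep (hσ : IsSchrodinger ℏ σ) (hℏ : 0 ≤ ℏ) :
    IsBoundedRep (G := HeisenbergGroup) volume
      fun g => ((σ g).toContinuousLinearEquiv : Lp ℂ 2 (volume : Measure ℝ) →L[ℂ] _) where
  map_mul_apply := hσ.apply_heisMul hℏ
  exists_norm_le := ⟨1, fun g => (σ g).toLinearIsometry.norm_toContinuousLinearMap_le⟩
  aestronglyMeasurable_apply f := (hσ.stronglyMeasurable_apply f).aestronglyMeasurable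

end IsSchrodinger

theorem IsBoundedRep.integral_heisComm_smul {E : Type*} [NormedAddCommGroup E] [NormedSpace ℂ E]
    [CompleteSpace E] {π : ℝ × ℝ × ℝ → E →L[ℂ] E}
    (hπ : IsBoundedRep (G := HeisenbergGroup) volume π) {k₁ k₂ : ℝ × ℝ × ℝ → ℂ}
    (h₁ : Integrable k₁) (h₂ : Integrable k₂) (v : E) :
    ∫ g, heisComm k₁ k₂ g • π g v =
      (∫ g, k₁ g • π g (∫ h, k₂ h • π h v)) - ∫ g, k₂ g • π g (∫ h, k₁ h • π h v) := by
  simp only [heisComm, sub_smul]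
  calc ∫ g, (heisConv k₁ k₂ g • π g v - heisConv k₂ k₁ g • π g v)
      = (∫ g, heisConv k₁ k₂ g • π g v) - ∫ g, heisConv k₂ k₁ g • π g v :=
        integral_sub (hπ.integrable_smul_apply (integrable_heisConv h₁ h₂) v)
          (hπ.integrable_smul_apply (integrable_heisConv h₂ h₁) v)
    _ = _ := congrArg₂ (· - ·) (hπ.integral_smul_integral h₁ h₂ v).symm
          (hπ.integral_smul_integral h₂ h₁ v).symm

theorem pmechanical_bracket_gives_quantum_commutator_general {E : Type*} [NormedAddCommGroup E]
    [NormedSpace ℂ E] [CompleteSpace E] {π : ℝ × ℝ × ℝ → E →L[ℂ] E}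
    (hπ : IsBoundedRep (G := HeisenbergGroup) volume π) {ω : ℂ} (hω : ω ≠ 0)
    (hcenter : ∀ s v, π (s, 0, 0) v = Complex.exp (ω * s) • v) {k₁ k₂ : ℝ × ℝ × ℝ → ℂ}
    (h₁ : Integrable k₁) (h₂ : Integrable k₂) (m₁ : Integrable fun g => ‖g‖ * ‖k₁ g‖)
    (m₂ : Integrable fun g => ‖g‖ * ‖k₂ g‖) :
    Integrable (heisAnti (heisComm k₁ k₂)) ∧
    ∀ v, ∫ g, heisAnti (heisComm k₁ k₂) g • π g v =
      -ω⁻¹ • ((∫ g, k₁ g • π g (∫ h, k₂ h • π h v)) - ∫ g, k₂ g • π g (∫ h, k₁ h • π h v)) := by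
  have hC := integrable_heisComm h₁ h₂
  have hsC := integrable_fst_smul_heisComm h₁ h₂ m₁ m₂
  have h0 := centralIntegral_heisComm_ae_eq_zero h₁ h₂
  refine ⟨integrable_setIntegral_Iic_fst hC hsC h0, fun v => ?_⟩
  obtain ⟨M, hM⟩ := hπ.exists_norm_apply_le v
  have hchar (s : ℝ) (p : ℝ × ℝ) : π (s, p) v = Complex.exp (ω * s) • π (0, p) v := by
    rw [← hcenter, ← hπ.map_mul_apply (s, 0, 0) (0, p)]
    congr 2
    change (s, p) = heisMul (s, 0, 0) (0, p)
    simp [heisMul]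
  calc ∫ g, heisAnti (heisComm k₁ k₂) g • π g v
      = -ω⁻¹ • ∫ g, heisComm k₁ k₂ g • π g v :=
        integral_setIntegral_Iic_fst_smul hC hsC h0 (hπ.aestronglyMeasurable_apply v) hM hω hchar
    _ = -ω⁻¹ • ((∫ g, k₁ g • π g (∫ h, k₂ h • π h v)) - ∫ g, k₂ g • π g (∫ h, k₁ h • π h v)) := by
        rw [hπ.integral_heisComm_smul h₁ h₂ v]

/-- The image of the p-mechanical bracket under the
Schrödinger representation is a scalar multiple of the operator commutator: for
Schwartz `k₁, k₂`, the antiderivative `A(k₁*k₂ − k₂*k₁)` is integrable on `ℝ³`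
and `σ_ℏ(A(k₁*k₂ − k₂*k₁))f = −(2iℏ)⁻¹·(σ_ℏ(k₁)(σ_ℏ(k₂)f) − σ_ℏ(k₂)(σ_ℏ(k₁)f))`
for every `f ∈ L²(ℝ,ℂ)`, where `σ_ℏ(k)f = ∫_{ℝ³} k(g)·(σ_ℏ(g)f) dg`. -/
theorem pmechanical_bracket_gives_quantum_commutator
    (ℏ : ℝ) (hℏ : 0 < ℏ)
    (σ : ℝ × ℝ × ℝ → (Lp ℂ 2 (volume : Measure ℝ) ≃ₗᵢ[ℂ] Lp ℂ 2 (volume : Measure ℝ)))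
    (hσ : ∀ (s x y : ℝ) (f : Lp ℂ 2 (volume : Measure ℝ)),
      (σ (s, x, y) f : ℝ → ℂ) =ᵐ[volume] fun t : ℝ =>
        Complex.exp (Complex.I *
            ((2 * s * ℏ - Real.sqrt (2 * ℏ) * y * t + ℏ * x * y : ℝ) : ℂ)) *
          (f : ℝ → ℂ) (t - Real.sqrt (2 * ℏ) * x))
    (k₁ k₂ : SchwartzMap (ℝ × ℝ × ℝ) ℂ) :
    Integrable (heisAnti (heisComm (⇑k₁) (⇑k₂))) (volume : Measure (ℝ × ℝ × ℝ)) ∧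
    ∀ f : Lp ℂ 2 (volume : Measure ℝ),
      ∫ g : ℝ × ℝ × ℝ, heisAnti (heisComm (⇑k₁) (⇑k₂)) g • (σ g f) =
        (-(2 * Complex.I * (ℏ : ℂ))⁻¹) •
          ((∫ g : ℝ × ℝ × ℝ, k₁ g • σ g (∫ g' : ℝ × ℝ × ℝ, k₂ g' • σ g' f)) -
            ∫ g : ℝ × ℝ × ℝ, k₂ g • σ g (∫ g' : ℝ × ℝ × ℝ, k₁ g' • σ g' f)) := by
  have hsch : IsSchrodinger ℏ σ := hσ
  have hmoment (k : SchwartzMap (ℝ × ℝ × ℝ) ℂ) : Integrable fun g => ‖g‖ * ‖k g‖ := by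
    simpa only [pow_one] using k.integrable_pow_mul volume 1
  exact pmechanical_bracket_gives_quantum_commutator_general (hsch.isBoundedRep hℏ.le)
    (by simp [hℏ.ne']) hsch.apply_center k₁.integrable k₂.integrable (hmoment k₁) (hmoment k₂)
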